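/- For every x ≥ 0 and 𝖨 ≥ 0, the kernel K(x,·) is a probability density on [0,∞) with mean x + 𝖨 + 1; that is, ∫₀^∞ K(x,y) dy = 1 and ∫₀^∞ y · K(x,y) dy = x + 𝖨 + 1. -/

import Mathlib

/-!
`K I x` is the density of `‖√x + √I e^{iΘ} + Z‖²`, where `Z` is a standard circularly symmetric
complex Gaussian and `Θ` an independent uniform phase. Averaging the Gaussian density over the
circle of radius `√I` produces the Bessel factor of the kernel, and the integral over `θ` averages
the resulting planar density over the circle `‖z‖² = y`. Integration against `K I x` is therefore
integration over `ℂ` in polar coordinates with `y = r²`, so the total mass is one. The mean is a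
second moment in the plane; the parallel axis theorem says that translating an even density by `a`
adds `‖a‖²` to it, first for the translates `Z + a` with `‖a‖² = I`, then for the translate by `√x`.
-/

open MeasureTheory Real Filter Topology

noncomputable def besselI0 (r : ℝ) : ℝ :=
  (1 / (2 * π)) * ∫ t in (0:ℝ)..(2 * π), Real.exp (r * Real.cos t)

noncomputable def K (I x y : ℝ) : ℝ :=
  (1 / (2 * π)) * ∫ θ in (-π)..π,
    Real.exp (-(y + x + I - 2 * Real.sqrt (y * x) * Real.cos θ)) *
      besselI0 (2 * Real.sqrt (I * (y + x - 2 * Real.sqrt (y * x) * Real.cos θ)))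

noncomputable def outDen (I : ℝ) (F : Measure ℝ) (y : ℝ) : ℝ :=
  ∫ x, K I x y ∂F

noncomputable def outEnt (I : ℝ) (F : Measure ℝ) : ℝ :=
  -∫ y in Set.Ioi (0:ℝ), outDen I F y * Real.log (outDen I F y)

noncomputable def margEnt (I : ℝ) (F : Measure ℝ) (x : ℝ) : ℝ :=
  -∫ y in Set.Ioi (0:ℝ), K I x y * Real.log (outDen I F y)

open Set Metric Function
open scoped RealInnerProductSpace

section EvenWeight

variable {V F : Type*} [NormedAddCommGroup F] [NormedSpace ℝ F]

lemma integral_eq_zero_of_odd [AddGroup V] [MeasurableSpace V] [MeasurableNeg V] {μ : Measure V}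
    [μ.IsNegInvariant] {f : V → F} (hf : f.Odd) : ∫ v, f v ∂μ = 0 := by
  have : IsAddTorsionFree F := .of_isTorsionFree ℝ F
  simp_rw [← self_eq_neg, ← integral_neg, ← hf.eq, integral_neg_eq_self]

variable [NormedAddCommGroup V] [InnerProductSpace ℝ V] [MeasurableSpace V] [BorelSpace V]
  {μ : Measure V} {φ : V → F}

lemma integrable_inner_smul (h₀ : Integrable φ μ) (h₂ : Integrable (fun v ↦ ‖v‖ ^ 2 • φ v) μ)
    (a : V) : Integrable (fun v ↦ ⟪v, a⟫ • φ v) μ := by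
  refine (h₂.norm.add (h₀.norm.const_mul (‖a‖ ^ 2))).mono'
    ((by fun_prop : Continuous fun v ↦ ⟪v, a⟫).aestronglyMeasurable.smul h₀.1)
    (ae_of_all _ fun v ↦ ?_)
  have hinner : |⟪v, a⟫| ≤ ‖v‖ ^ 2 + ‖a‖ ^ 2 := by
    nlinarith [abs_real_inner_le_norm v a, sq_nonneg (‖v‖ - ‖a‖), sq_nonneg ‖v‖, sq_nonneg ‖a‖]
  simpa [norm_smul, add_mul] using mul_le_mul_of_nonneg_right hinner (norm_nonneg (φ v))

lemma integral_norm_sq_smul_comp_sub_of_even [μ.IsAddRightInvariant] [μ.IsNegInvariant]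
    (hφ : φ.Even) (h₀ : Integrable φ μ) (h₂ : Integrable (fun v ↦ ‖v‖ ^ 2 • φ v) μ) (a : V) :
    ∫ v, ‖v‖ ^ 2 • φ (v - a) ∂μ = ∫ v, ‖v‖ ^ 2 • φ v ∂μ + ‖a‖ ^ 2 • ∫ v, φ v ∂μ := by
  have h₁ : Integrable (fun v ↦ (2 : ℝ) • ⟪v, a⟫ • φ v) μ :=
    (integrable_inner_smul h₀ h₂ a).smul 2
  have hcross : ∫ v, ⟪v, a⟫ • φ v ∂μ = 0 :=
    integral_eq_zero_of_odd fun v ↦ by simp [hφ.eq]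
  calc ∫ v, ‖v‖ ^ 2 • φ (v - a) ∂μ
      = ∫ v, ‖v + a‖ ^ 2 • φ v ∂μ := by
        simpa using integral_sub_right_eq_self (fun v ↦ ‖v + a‖ ^ 2 • φ v) a (μ := μ)
    _ = ∫ v, (‖v‖ ^ 2 • φ v + (2 : ℝ) • ⟪v, a⟫ • φ v + ‖a‖ ^ 2 • φ v) ∂μ := by
        simp_rw [norm_add_sq_real, add_smul, mul_smul]
    _ = ∫ v, ‖v‖ ^ 2 • φ v ∂μ + ‖a‖ ^ 2 • ∫ v, φ v ∂μ := by
        rw [integral_add (h₂.fun_add h₁) (h₀.fun_smul _), integral_add h₂ h₁, integral_smul, hcross,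
          smul_zero, add_zero, integral_smul]

end EvenWeight

section CircleAverage

variable {E : Type*} [NormedAddCommGroup E] [NormedSpace ℝ E]

lemma circleAverage_eq_integral_neg_pi_pi (f : ℂ → E) (c : ℂ) (R : ℝ) :
    circleAverage f c R = (2 * π)⁻¹ • ∫ θ in (-π)..π, f (circleMap c R θ) := by
  have hper : Periodic (fun θ ↦ f (circleMap c R θ)) (2 * π) := (periodic_circleMap c R).comp f
  have hshift := hper.intervalIntegral_add_eq 0 (-π)
  rw [zero_add, show -π + 2 * π = π by ring] at hshift
  rw [circleAverage, hshift]

lemma integral_circleAverage_comm {X : Type*} [MeasurableSpace X] {μ : Measure X} [SFinite μ]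
    {f : X → ℂ → E} {c : ℂ} {R : ℝ} (hf : StronglyMeasurable (uncurry f))
    (hint : ∀ a ∈ sphere c |R|, Integrable (fun x ↦ f x a) μ)
    (hnorm : CircleIntegrable (fun a ↦ ∫ x, ‖f x a‖ ∂μ) c R) :
    ∫ x, circleAverage (f x) c R ∂μ = circleAverage (fun a ↦ ∫ x, f x a ∂μ) c R := by
  have hprod : Integrable (uncurry fun x θ ↦ f x (circleMap c R θ))
      (μ.prod (volume.restrict (Ioc 0 (2 * π)))) := by
    have hmeas : Measurable fun p : X × ℝ ↦ (p.1, circleMap c R p.2) := by fun_prop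
    refine (integrable_prod_iff' (hf.comp_measurable hmeas).aestronglyMeasurable).2
      ⟨ae_of_all _ fun θ ↦ hint _ (circleMap_mem_sphere' c R θ), ?_⟩
    exact (intervalIntegrable_iff_integrableOn_Ioc_of_le two_pi_pos.le).1 hnorm
  simp only [circleAverage, intervalIntegral.integral_of_le two_pi_pos.le]
  rw [integral_smul, integral_integral_swap hprod]

lemma integrableOn_polarCoord_symm_iff {f : ℂ → E} :
    IntegrableOn (fun p : ℝ × ℝ ↦ p.1 • f (Complex.polarCoord.symm p)) polarCoord.target ↔
      Integrable f := by
  rw [← Complex.volume_preserving_equiv_real_prod.symm.integrable_comp_emb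
      Complex.measurableEquivRealProd.symm.measurableEmbedding,
    ← integrableOn_univ, ← integrableOn_congr_set_ae polarCoord_source_ae_eq_univ,
    ← polarCoord.symm_image_target_eq_source,
    integrableOn_image_iff_integrableOn_abs_det_fderiv_smul volume
      polarCoord.open_target.measurableSet
      (fun p _ ↦ (hasFDerivAt_polarCoord_symm p).hasFDerivWithinAt) polarCoord.symm.injOn]
  refine integrableOn_congr_fun (fun p hp ↦ ?_) polarCoord.open_target.measurableSet
  rw [det_fderivPolarCoordSymm, abs_of_pos hp.1, comp_apply,
    Complex.measurableEquivRealProd_symm_polarCoord_symm_apply]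

lemma integral_Ioi_smul_circleAverage {f : ℂ → E} (hf : Integrable f) :
    ∫ r in Ioi (0 : ℝ), r • circleAverage f 0 r = (2 * π)⁻¹ • ∫ z, f z := by
  have hpolar := integrableOn_polarCoord_symm_iff.2 hf
  have hpt (p : ℝ × ℝ) : Complex.polarCoord.symm p = circleMap 0 p.1 p.2 := by
    simp [Complex.polarCoord_symm_apply, circleMap, Complex.exp_mul_I]
  simp only [hpt, polarCoord_target, IntegrableOn, Measure.volume_eq_prod] at hpolar
  rw [← Complex.integral_comp_polarCoord_symm, polarCoord_target, Measure.volume_eq_prod]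
  simp only [hpt]
  rw [setIntegral_prod _ hpolar, ← integral_smul]
  simp only [integral_smul, circleAverage_eq_integral_neg_pi_pi,
    intervalIntegral.integral_of_le (neg_le_self pi_pos.le), integral_Ioc_eq_integral_Ioo,
    smul_comm (2 * π)⁻¹]

lemma integral_Ioi_circleAverage_sqrt {f : ℂ → E} (hf : Integrable f) :
    ∫ y in Ioi (0 : ℝ), circleAverage f 0 (√y) = π⁻¹ • ∫ z, f z := by
  calc ∫ y in Ioi (0 : ℝ), circleAverage f 0 (√y)
      = ∫ r in Ioi (0 : ℝ), (2 : ℝ) • r • circleAverage f 0 r := by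
        rw [← integral_comp_rpow_Ioi_of_pos two_pos]
        refine setIntegral_congr_fun measurableSet_Ioi fun r hr ↦ ?_
        norm_num [sqrt_sq (le_of_lt hr), mul_smul]
    _ = π⁻¹ • ∫ z, f z := by
        rw [integral_smul, integral_Ioi_smul_circleAverage hf, smul_smul, mul_inv,
          mul_inv_cancel_left₀ two_ne_zero]

end CircleAverage

lemma norm_circleMap_sub_circleMap_sq (r s α β : ℝ) :
    ‖circleMap 0 r α - circleMap 0 s β‖ ^ 2 = r ^ 2 + s ^ 2 - 2 * (r * s) * cos (α - β) := by
  simp only [Complex.sq_norm, Complex.normSq_apply, circleMap_zero, Complex.exp_mul_I, cos_sub,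
    ← Complex.ofReal_cos, ← Complex.ofReal_sin, Complex.sub_re, Complex.sub_im, Complex.mul_re,
    Complex.mul_im, Complex.add_re, Complex.add_im, Complex.ofReal_re, Complex.ofReal_im,
    Complex.I_re, Complex.I_im]
  linear_combination r ^ 2 * sin_sq_add_cos_sq α + s ^ 2 * sin_sq_add_cos_sq β

lemma integral_exp_neg_norm_sub_sq (a : ℂ) : ∫ z : ℂ, exp (-‖z - a‖ ^ 2) = π := by
  rw [integral_sub_right_eq_self (fun z : ℂ ↦ exp (-‖z‖ ^ 2)) a]
  simpa using GaussianFourier.integral_rexp_neg_mul_sq_norm (V := ℂ) one_pos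

lemma integrable_exp_neg_norm_sub_sq (a : ℂ) : Integrable fun z : ℂ ↦ exp (-‖z - a‖ ^ 2) :=
  .of_integral_ne_zero (by rw [integral_exp_neg_norm_sub_sq]; exact pi_ne_zero)

lemma integral_norm_sq_mul_exp_neg_norm_sub_sq (a : ℂ) :
    ∫ z : ℂ, ‖z‖ ^ 2 * exp (-‖z - a‖ ^ 2) = π * (‖a‖ ^ 2 + 1) := by
  have hcentred : ∫ z : ℂ, ‖z‖ ^ 2 * exp (-‖z‖ ^ 2) = π := by
    simpa using
      Complex.integral_rpow_mul_exp_neg_rpow (p := 2) (q := 2) one_le_two (by norm_num)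
  have h₀ := integrable_exp_neg_norm_sub_sq 0
  have hmass := integral_exp_neg_norm_sub_sq 0
  simp only [sub_zero] at h₀ hmass
  have h₂ : Integrable fun z : ℂ ↦ ‖z‖ ^ 2 * exp (-‖z‖ ^ 2) :=
    .of_integral_ne_zero (by rw [hcentred]; exact pi_ne_zero)
  have haxis := integral_norm_sq_smul_comp_sub_of_even (fun z ↦ by simp) h₀ h₂ a
  simp only [smul_eq_mul] at haxis
  rw [haxis, hcentred, hmass]
  ring

lemma integrable_norm_sq_mul_exp_neg_norm_sub_sq (a : ℂ) :
    Integrable fun z : ℂ ↦ ‖z‖ ^ 2 * exp (-‖z - a‖ ^ 2) :=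
  .of_integral_ne_zero (by rw [integral_norm_sq_mul_exp_neg_norm_sub_sq]; positivity)

/-- The density on `ℂ` of `R e^{iΘ} + Z`, where the phase `Θ` is uniform and `Z` is an independent
circularly symmetric complex Gaussian with density `exp (-‖z‖²) / π`: the sum of the interference
and the noise in the channel with kernel `K (R ^ 2)`. -/
noncomputable def noiseDensity (R : ℝ) (z : ℂ) : ℝ :=
  π⁻¹ * circleAverage (fun a ↦ exp (-‖z - a‖ ^ 2)) 0 R

lemma noiseDensity_eq_exp_mul_besselI0 (R : ℝ) (z : ℂ) :
    noiseDensity R z = π⁻¹ * (exp (-(‖z‖ ^ 2 + R ^ 2)) * besselI0 (2 * (R * ‖z‖))) := by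
  have hz : z = circleMap 0 ‖z‖ z.arg := by simp [circleMap]
  have hexp (θ : ℝ) : exp (-‖z - circleMap 0 R (θ + z.arg)‖ ^ 2) =
      exp (-(‖z‖ ^ 2 + R ^ 2)) * exp (2 * (R * ‖z‖) * cos θ) := by
    have hnorm := norm_circleMap_sub_circleMap_sq ‖z‖ R z.arg (θ + z.arg)
    rw [← hz, sub_add_cancel_right, cos_neg] at hnorm
    rw [hnorm, ← exp_add]
    ring_nf
  rw [noiseDensity, circleAverage_eq_integral_add z.arg]
  simp only [hexp, intervalIntegral.integral_const_mul, besselI0, smul_eq_mul]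
  ring

lemma even_noiseDensity (R : ℝ) : (noiseDensity R).Even := fun z ↦ by
  simp only [noiseDensity_eq_exp_mul_besselI0, norm_neg]

lemma integral_mul_noiseDensity {R : ℝ} {g : ℂ → ℝ} (hg : Measurable g) (hg₀ : 0 ≤ g)
    (hint : ∀ a ∈ sphere 0 |R|, Integrable fun z ↦ g z * exp (-‖z - a‖ ^ 2))
    (hcirc : CircleIntegrable (fun a ↦ ∫ z, g z * exp (-‖z - a‖ ^ 2)) 0 R) :
    ∫ z, g z * noiseDensity R z =
      π⁻¹ * circleAverage (fun a ↦ ∫ z, g z * exp (-‖z - a‖ ^ 2)) 0 R := by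
  have hnorm (a z : ℂ) : ‖g z * exp (-‖z - a‖ ^ 2)‖ = g z * exp (-‖z - a‖ ^ 2) :=
    norm_of_nonneg (mul_nonneg (hg₀ z) (exp_nonneg _))
  rw [← integral_circleAverage_comm (f := fun z a ↦ g z * exp (-‖z - a‖ ^ 2))
    (Measurable.stronglyMeasurable (by fun_prop)) hint (by simpa only [hnorm] using hcirc),
    ← integral_const_mul]
  congr with z
  rw [noiseDensity, mul_left_comm, ← smul_eq_mul (g z), ← circleAverage_fun_smul]
  rfl

lemma integral_noiseDensity (R : ℝ) : ∫ z, noiseDensity R z = 1 := by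
  have hmoment := integral_mul_noiseDensity (R := R) (g := 1) measurable_one zero_le_one
    (fun a _ ↦ by simpa using integrable_exp_neg_norm_sub_sq a)
    (by simp [integral_exp_neg_norm_sub_sq])
  simpa [integral_exp_neg_norm_sub_sq, circleAverage_const] using hmoment

lemma integral_norm_sq_mul_noiseDensity (R : ℝ) :
    ∫ z, ‖z‖ ^ 2 * noiseDensity R z = R ^ 2 + 1 := by
  have hmean (a : ℂ) (ha : a ∈ sphere 0 |R|) :
      ∫ z : ℂ, ‖z‖ ^ 2 * exp (-‖z - a‖ ^ 2) = π * (R ^ 2 + 1) := by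
    rw [integral_norm_sq_mul_exp_neg_norm_sub_sq, mem_sphere_zero_iff_norm.1 ha, sq_abs]
  rw [integral_mul_noiseDensity (by fun_prop) (fun z ↦ by positivity)
    (fun a _ ↦ integrable_norm_sq_mul_exp_neg_norm_sub_sq a)
    ((circleIntegrable_congr hmean).2 (circleIntegrable_const _ _ _)),
    circleAverage_const_on_circle hmean, inv_mul_cancel_left₀ pi_ne_zero]

lemma integral_norm_sq_mul_noiseDensity_sub (R : ℝ) (a : ℂ) :
    ∫ z, ‖z‖ ^ 2 * noiseDensity R (z - a) = ‖a‖ ^ 2 + R ^ 2 + 1 := by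
  have h₀ : Integrable (noiseDensity R) :=
    .of_integral_ne_zero (by simp [integral_noiseDensity])
  have h₂ : Integrable fun z ↦ ‖z‖ ^ 2 * noiseDensity R z :=
    .of_integral_ne_zero (by rw [integral_norm_sq_mul_noiseDensity]; positivity)
  have haxis := integral_norm_sq_smul_comp_sub_of_even (even_noiseDensity R) h₀ h₂ a
  simp only [smul_eq_mul, integral_norm_sq_mul_noiseDensity, integral_noiseDensity] at haxis
  rw [haxis]
  ring

section Kernel

variable {I x : ℝ}

lemma K_eq_circleAverage_noiseDensity {y : ℝ} (hI : 0 ≤ I) (hx : 0 ≤ x) (hy : 0 ≤ y) :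
    K I x y = π * circleAverage (fun z ↦ noiseDensity (√I) (z - √x)) 0 (√y) := by
  have hnorm (θ : ℝ) : ‖circleMap 0 (√y) θ - √x‖ ^ 2 = y + x - 2 * √(y * x) * cos θ := by
    have := norm_circleMap_sub_circleMap_sq (√y) (√x) θ 0
    simpa [circleMap_zero, sq_sqrt, hx, hy] using this
  have hexp (θ : ℝ) : π * noiseDensity (√I) (circleMap 0 (√y) θ - √x) =
      exp (-(y + x + I - 2 * √(y * x) * cos θ)) *
        besselI0 (2 * √(I * (y + x - 2 * √(y * x) * cos θ))) := by
    rw [noiseDensity_eq_exp_mul_besselI0, mul_inv_cancel_left₀ pi_ne_zero, ← hnorm,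
      sqrt_mul hI, sqrt_sq (norm_nonneg _), hnorm, sq_sqrt hI]
    ring_nf
  rw [K, circleAverage_eq_integral_neg_pi_pi]
  simp only [← hexp, intervalIntegral.integral_const_mul, smul_eq_mul]
  ring

lemma integral_Ioi_mul_K (hI : 0 ≤ I) (hx : 0 ≤ x) {g : ℝ → ℝ}
    (hg : Integrable fun z : ℂ ↦ g (‖z‖ ^ 2) * noiseDensity (√I) (z - √x)) :
    ∫ y in Ioi (0 : ℝ), g y * K I x y =
      ∫ z : ℂ, g (‖z‖ ^ 2) * noiseDensity (√I) (z - √x) := by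
  set f : ℂ → ℝ := fun z ↦ g (‖z‖ ^ 2) * noiseDensity (√I) (z - √x)
  have hfiber (y : ℝ) (hy : y ∈ Ioi (0 : ℝ)) : g y * K I x y = π * circleAverage f 0 (√y) := by
    have hsphere : EqOn f (fun z ↦ g y • noiseDensity (√I) (z - √x)) (sphere 0 |√y|) := by
      intro z hz
      simp only [f, mem_sphere_zero_iff_norm.1 hz, sq_abs, sq_sqrt (le_of_lt hy), smul_eq_mul]
    rw [circleAverage_congr_sphere hsphere, circleAverage_fun_smul, smul_eq_mul,
      K_eq_circleAverage_noiseDensity hI hx (le_of_lt hy)]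
    ring
  rw [setIntegral_congr_fun measurableSet_Ioi hfiber, integral_const_mul,
    integral_Ioi_circleAverage_sqrt hg, smul_eq_mul, mul_inv_cancel_left₀ pi_ne_zero]

end Kernel

theorem stmt_2 (I x : ℝ) (hI : 0 ≤ I) (hx : 0 ≤ x) :
    (∫ y in Set.Ioi (0:ℝ), K I x y) = 1 ∧
    (∫ y in Set.Ioi (0:ℝ), y * K I x y) = x + I + 1 := by
  have hmass : ∫ z : ℂ, noiseDensity (√I) (z - √x) = 1 := by
    rw [integral_sub_right_eq_self, integral_noiseDensity]
  have hmoment : ∫ z : ℂ, ‖z‖ ^ 2 * noiseDensity (√I) (z - √x) = x + I + 1 := by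
    rw [integral_norm_sq_mul_noiseDensity_sub, Complex.norm_real, norm_eq_abs, sq_abs,
      sq_sqrt hx, sq_sqrt hI]
  constructor
  · have hint : Integrable fun z : ℂ ↦ noiseDensity (√I) (z - √x) :=
      .of_integral_ne_zero (by simp [hmass])
    simpa [hmass] using integral_Ioi_mul_K hI hx (g := 1) (by simpa using hint)
  · have hint : Integrable fun z : ℂ ↦ ‖z‖ ^ 2 * noiseDensity (√I) (z - √x) :=
      .of_integral_ne_zero (by rw [hmoment]; positivity)
    exact (integral_Ioi_mul_K hI hx (g := id) hint).trans hmoment
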